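/- Let a finite family of traces {(ξ_i, r_i)}_{i=1}^N over finite sets A, S, T be given, fix (a,s,t) ∈ A × S × T, and suppose the successful-trace row sum Σ_{a''} C^1_succ[a,s,t,a''] is positive, where C^1_succ counts only transitions from traces with r_i = 1. Let a* ∈ A be a successor such that no trace with r_i = 0 contains the transition (a,s,t,a*) (a* is observed only in successful traces). Then the normalized routing probability M^α[a,s,t,a*] = C^α[a,s,t,a*] / Σ_{a''} C^α[a,s,t,a''] is a non-increasing function of α on [0,1]. -/

import Mathlib

/-!
Traces over finite sets `A` (agents), `S` (statuses), `T` (task types).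
A trace is a pair `(ξ i, r i)` with outcome label `r i ∈ {0,1}` and `ξ i` a finite
list of transitions `(a, s, t, a') ∈ A × S × T × A`.
The weighted count tensor is
`C^α[a,s,t,a'] = Σ_i (r_i + α(1 - r_i)) · n_i(a,s,t,a')`.
When the row sum is positive, the normalized routing matrix row is
`M^α[a,s,t,a'] = C^α[a,s,t,a'] / Σ_{a''} C^α[a,s,t,a'']`.
-/

/-- The weighted count tensor `C^α[a,s,t,a']` of a finite family of traces. -/
noncomputable def countTensor {A S T : Type*} [DecidableEq A] [DecidableEq S] [DecidableEq T]
    {N : ℕ} (ξ : Fin N → List (A × S × T × A)) (r : Fin N → ℝ) (α : ℝ)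
    (a : A) (s : S) (t : T) (a' : A) : ℝ :=
  ∑ i : Fin N, (r i + α * (1 - r i)) * ((ξ i).count (a, s, t, a') : ℝ)

/-- The normalized routing matrix row `M^α[a,s,t,a']`. -/
noncomputable def routingMatrix {A S T : Type*} [Fintype A]
    [DecidableEq A] [DecidableEq S] [DecidableEq T]
    {N : ℕ} (ξ : Fin N → List (A × S × T × A)) (r : Fin N → ℝ) (α : ℝ)
    (a : A) (s : S) (t : T) (a' : A) : ℝ :=
  countTensor ξ r α a s t a' / ∑ a'' : A, countTensor ξ r α a s t a''

theorem antitoneOn_div_add_mul {K : Type*} [Semifield K] [LinearOrder K] [IsStrictOrderedRing K]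
    {c p q : K} (hc : 0 ≤ c) (hp : 0 < p) (hq : 0 ≤ q) :
    AntitoneOn (fun x => c / (p + x * q)) (Set.Ici 0) := by
  intro x hx y _ hxy
  have hpos : 0 < p + x * q := add_pos_of_pos_of_nonneg hp (mul_nonneg hx hq)
  have hle : p + x * q ≤ p + y * q := by gcongr
  exact div_le_div_of_nonneg_left hc hpos hle

section RoutingMatrix

variable {A S T : Type*} [DecidableEq A] [DecidableEq S] [DecidableEq T]
  {N : ℕ} {ξ : Fin N → List (A × S × T × A)} {r : Fin N → ℝ}

/-- The successful-trace count tensor `C_succ[a,s,t,a']`. Traces are weighted by `r i` rather than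
selected by `r i = 1`, so that real-valued labels are covered as well. -/
noncomputable def succTensor (ξ : Fin N → List (A × S × T × A)) (r : Fin N → ℝ)
    (a : A) (s : S) (t : T) (a' : A) : ℝ :=
  ∑ i, r i * ((ξ i).count (a, s, t, a') : ℝ)

/-- The failed-trace count tensor `C_fail[a,s,t,a']`, the coefficient of `α` in `C^α[a,s,t,a']`.
Traces are weighted by `1 - r i` rather than selected by `r i = 0`. -/
noncomputable def failTensor (ξ : Fin N → List (A × S × T × A)) (r : Fin N → ℝ)
    (a : A) (s : S) (t : T) (a' : A) : ℝ :=
  ∑ i, (1 - r i) * ((ξ i).count (a, s, t, a') : ℝ)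

theorem countTensor_eq_succTensor_add_mul_failTensor (α : ℝ) (a : A) (s : S) (t : T) (a' : A) :
    countTensor ξ r α a s t a' = succTensor ξ r a s t a' + α * failTensor ξ r a s t a' := by
  simp only [countTensor, succTensor, failTensor, add_mul, mul_assoc, Finset.sum_add_distrib,
    Finset.mul_sum]

theorem sum_countTensor [Fintype A] (α : ℝ) (a : A) (s : S) (t : T) :
    ∑ a', countTensor ξ r α a s t a' =
      ∑ a', succTensor ξ r a s t a' + α * ∑ a', failTensor ξ r a s t a' := by
  simp only [countTensor_eq_succTensor_add_mul_failTensor, Finset.sum_add_distrib, Finset.mul_sum]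

theorem failTensor_nonneg (hr : ∀ i, r i ≤ 1) (a : A) (s : S) (t : T) (a' : A) :
    0 ≤ failTensor ξ r a s t a' :=
  Finset.sum_nonneg fun i _ => mul_nonneg (sub_nonneg.2 (hr i)) (Nat.cast_nonneg _)

theorem countTensor_eq_sum_count {a : A} {s : S} {t : T} {a' : A}
    (h : ∀ i, (a, s, t, a') ∈ ξ i → r i = 1) (α : ℝ) :
    countTensor ξ r α a s t a' = ∑ i, ((ξ i).count (a, s, t, a') : ℝ) := by
  refine Finset.sum_congr rfl fun i _ => ?_
  by_cases hmem : (a, s, t, a') ∈ ξ i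
  · simp [h i hmem]
  · simp [List.count_eq_zero_of_not_mem hmem]

theorem routing_probability_antitone_in_alpha_general [Fintype A] (hr : ∀ i, r i ≤ 1)
    {a : A} {s : S} {t : T} (hsucc : 0 < ∑ a', succTensor ξ r a s t a')
    {astar : A} (hastar : ∀ i, (a, s, t, astar) ∈ ξ i → r i = 1) :
    AntitoneOn (fun α => routingMatrix ξ r α a s t astar) (Set.Ici 0) := by
  have hfail : 0 ≤ ∑ a', failTensor ξ r a s t a' :=
    Finset.sum_nonneg fun a' _ => failTensor_nonneg hr a s t a'
  have hcount : 0 ≤ ∑ i, ((ξ i).count (a, s, t, astar) : ℝ) := by positivity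
  simpa only [routingMatrix, countTensor_eq_sum_count hastar, sum_countTensor] using
    antitoneOn_div_add_mul hcount hsucc hfail

end RoutingMatrix

/-- Fix `(a,s,t)` and suppose the successful-trace row sum
`Σ_{a''} C^1_succ[a,s,t,a'']` is positive, where `C^1_succ` counts only transitions from
traces with `r i = 1`.  If `a*` is a successor such that no unsuccessful trace (`r i = 0`)
contains the transition `(a,s,t,a*)`, then `α ↦ M^α[a,s,t,a*]` is non-increasing on `[0,1]`. -/
theorem routing_probability_antitone_in_alpha
    {A S T : Type*} [Fintype A] [Fintype S] [Fintype T]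
    [DecidableEq A] [DecidableEq S] [DecidableEq T]
    {N : ℕ} (ξ : Fin N → List (A × S × T × A)) (r : Fin N → ℝ)
    (hr : ∀ i, r i = 0 ∨ r i = 1)
    (a : A) (s : S) (t : T)
    (hsucc : 0 < ∑ a'' : A, ∑ i : Fin N, r i * ((ξ i).count (a, s, t, a'') : ℝ))
    (astar : A)
    (hnofail : ∀ i, r i = 0 → (a, s, t, astar) ∉ ξ i) :
    ∀ α₁ α₂ : ℝ, 0 ≤ α₁ → α₁ ≤ α₂ → α₂ ≤ 1 →
      routingMatrix ξ r α₂ a s t astar ≤ routingMatrix ξ r α₁ a s t astar := by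
  intro α₁ α₂ h₀ h₁₂ _
  have hr_le : ∀ i, r i ≤ 1 := fun i => (hr i).elim (fun h => h.trans_le zero_le_one) Eq.le
  have hastar : ∀ i, (a, s, t, astar) ∈ ξ i → r i = 1 := fun i hmem =>
    (hr i).resolve_left fun h => hnofail i h hmem
  exact routing_probability_antitone_in_alpha_general hr_le hsucc hastar h₀ (h₀.trans h₁₂) h₁₂
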